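/- Let f be an orientation-preserving homeomorphism of ℝ² satisfying (P1) and (P2), with Fix(f) not compact, and let I be an adapted isotopy. Then for every z' ∈ Fix(f): (a) the function z ↦ ρ_{z'}(z) is bounded on Fix(f) ∖ {z'}; and (b) for every free disc U for f, the function z ↦ ρ_{z'}(z) is bounded on the set of points of Rec⁺(f) ∩ U where it is defined. Consequently ρ_{z'} is locally bounded on Rec⁺(f) ∖ Fix(f). -/

import Mathlib

open MeasureTheory Filter Topology Set Metric

noncomputable section

attribute [local instance] Classical.propDecidable

/-- An isotopy (within homeomorphisms of `X`) from the identity to `f`,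
parametrised by `t ∈ [0,1]` (the values for `t ∉ [0,1]` are irrelevant). -/
structure HIsotopy {X : Type*} [TopologicalSpace X] (f : X ≃ₜ X) where
  F : ℝ → X ≃ₜ X
  cont : Continuous fun p : ℝ × X => F p.1 p.2
  cont_symm : Continuous fun p : ℝ × X => (F p.1).symm p.2
  zero : F 0 = Homeomorph.refl X
  one : F 1 = f

/-- The set of fixed points of a map. -/
def FixPts {X : Type*} (g : X → X) : Set X := {z | g z = z}

/-- The set of positively recurrent points of `f`. -/
def RecPlus (f : ℂ ≃ₜ ℂ) : Set ℂ :=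
  {z | ∃ n : ℕ → ℕ, StrictMono n ∧ Tendsto (fun k => (⇑f)^[n k] z) atTop (𝓝 z)}

/-- The total angular variation (number of turns around the origin, i.e. the
integral of the polar-angle form `dθ`) of a continuous path `[0,1] → ℂ ∖ {0}`,
defined via a continuous lift of the argument (junk value otherwise). -/
def angVar (γ : ℝ → ℂ) : ℝ :=
  if h : ∃ θ : ℝ → ℝ, ContinuousOn θ (Set.Icc 0 1) ∧
      ∀ t ∈ Set.Icc (0 : ℝ) 1, γ t = (‖γ t‖ : ℂ) * Complex.exp ((θ t : ℂ) * Complex.I)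
  then (h.choose 1 - h.choose 0) / (2 * Real.pi)
  else 0

/-- `Enlace_I(z,z')`: the integral of `dθ` along `t ↦ f_t(z) - f_t(z')`. -/
def Enlace {f : ℂ ≃ₜ ℂ} (I : HIsotopy f) (z z' : ℂ) : ℝ :=
  angVar fun t => I.F t z - I.F t z'

/-- `Tourne_I(z)`: the integral of `dθ` along `t ↦ f_t(z)`. -/
def Tourne {f : ℂ ≃ₜ ℂ} (I : HIsotopy f) (z : ℂ) : ℝ :=
  angVar fun t => I.F t z

/-- Property (P1): `Enlace_I` is bounded on pairs of distinct fixed points. -/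
def P1 {f : ℂ ≃ₜ ℂ} (I : HIsotopy f) : Prop :=
  ∃ M : ℝ, ∀ z ∈ FixPts ⇑f, ∀ z' ∈ FixPts ⇑f, z ≠ z' → |Enlace I z z'| ≤ M

/-- Property (P2): `Tourne_I` is constant on the fixed points in a
neighbourhood of infinity (i.e. outside some compact set). -/
def P2 {f : ℂ ≃ₜ ℂ} (I : HIsotopy f) : Prop :=
  ∃ K : Set ℂ, IsCompact K ∧
    ∀ z ∈ FixPts ⇑f \ K, ∀ z' ∈ FixPts ⇑f \ K, Tourne I z = Tourne I z'

/-- An isotopy is adapted if `Tourne_I` vanishes on the fixed points in a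
neighbourhood of infinity. -/
def Adapted {f : ℂ ≃ₜ ℂ} (I : HIsotopy f) : Prop :=
  ∃ K : Set ℂ, IsCompact K ∧ ∀ z ∈ FixPts ⇑f \ K, Tourne I z = 0

/-- The orbit of `z` has rotation number `ρ` around `z'` (with respect to the
isotopy `I`): along every strictly increasing sequence of integers `(n k)` with
`f^[n k] z → z`, the Birkhoff averages of `Enlace I · z'` converge to `ρ`. -/
def HasRot {f : ℂ ≃ₜ ℂ} (I : HIsotopy f) (z' z : ℂ) (ρ : ℝ) : Prop :=
  ∀ n : ℕ → ℕ, StrictMono n → Tendsto (fun k => (⇑f)^[n k] z) atTop (𝓝 z) →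
    Tendsto (fun k => (∑ r ∈ Finset.range (n k), Enlace I ((⇑f)^[r] z) z') / (n k : ℝ))
      atTop (𝓝 ρ)

/-- The rotation number `ρ_{z'}(z)` as a function (junk value `0` if it is
not defined). -/
def rho {f : ℂ ≃ₜ ℂ} (I : HIsotopy f) (z' z : ℂ) : ℝ :=
  if h : ∃ ρ : ℝ, HasRot I z' z ρ then h.choose else 0

/-- A free disc for `f`: an open set homeomorphic to the plane and disjoint
from its image. -/
def FreeDisc (f : ℂ ≃ₜ ℂ) (U : Set ℂ) : Prop :=
  IsOpen U ∧ Nonempty (U ≃ₜ ℂ) ∧ Disjoint (⇑f '' U) U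

/-- The first return time `τ_U(z)` to `U` (junk value `0` if the orbit never
returns). -/
def retTime (f : ℂ ≃ₜ ℂ) (U : Set ℂ) (z : ℂ) : ℕ :=
  sInf {n : ℕ | 0 < n ∧ (⇑f)^[n] z ∈ U}

/-- `γ` is a path in `U` from `x` to `y` (parametrised by `[0,1]`). -/
def IsPathIn (U : Set ℂ) (x y : ℂ) (γ : ℝ → ℂ) : Prop :=
  ContinuousOn γ (Set.Icc 0 1) ∧ (∀ t ∈ Set.Icc (0 : ℝ) 1, γ t ∈ U) ∧ γ 0 = x ∧ γ 1 = y

/-- `α_{U,z'}(z) = Σ_{0 ≤ ℓ < τ_U(z)} Enlace_I(f^ℓ(z),z') + ∫_{γ_{U,z} - z'} dθ`,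
where `γ_{U,z}` is a path in `U` joining the first return `F_U(z)` to `z`. -/
def alphaU {f : ℂ ≃ₜ ℂ} (I : HIsotopy f) (U : Set ℂ) (z' z : ℂ) : ℝ :=
  (∑ ℓ ∈ Finset.range (retTime f U z), Enlace I ((⇑f)^[ℓ] z) z') +
    if h : ∃ γ : ℝ → ℂ, IsPathIn U ((⇑f)^[retTime f U z] z) z γ
    then angVar fun t => h.choose t - z' else 0

/-- `α̂_{U,R}(z) = sup { |α_{U,z'}(z)| : z' ∈ Fix(f), ‖z'‖ ≥ R }`. -/
def alphaHat {f : ℂ ≃ₜ ℂ} (I : HIsotopy f) (U : Set ℂ) (R : ℝ) (z : ℂ) : ℝ :=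
  sSup {a : ℝ | ∃ z' ∈ FixPts ⇑f, R ≤ ‖z'‖ ∧ a = |alphaU I U z' z|}

/-- The (closed) support of a measure. -/
def measSupport {X : Type*} [TopologicalSpace X] {m : MeasurableSpace X}
    (μ : Measure X) : Set X :=
  {x | ∀ U : Set X, IsOpen U → x ∈ U → μ U ≠ 0}

/-- The standard unit sphere `S² ⊂ ℝ³`. -/
notation "𝕊²" => Metric.sphere (0 : EuclideanSpace ℝ (Fin 3)) 1

instance : Fact (Module.finrank ℝ (EuclideanSpace ℝ (Fin 3)) = 3) :=
  ⟨finrank_euclideanSpace_fin⟩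

open Manifold in
/-- `g` is a `C¹` diffeomorphism of the standard sphere. -/
def IsC1SphereDiffeo (g : 𝕊² → 𝕊²) : Prop :=
  Function.Bijective g ∧ ContMDiff (𝓡 2) (𝓡 2) 1 g ∧
    ∃ g' : 𝕊² → 𝕊², Function.LeftInverse g' g ∧ Function.RightInverse g' g ∧
      ContMDiff (𝓡 2) (𝓡 2) 1 g'

/-- `f` extends to a `C¹` diffeomorphism of `S² = ℝ² ⊔ {∞}` for some smooth
structure on `S²`: transporting the extension of `f` to the one-point
compactification through some homeomorphism with the standard sphere yields a
`C¹` diffeomorphism. -/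
def ExtendsToC1SphereDiffeo (f : ℂ ≃ₜ ℂ) : Prop :=
  ∃ φ : OnePoint ℂ ≃ₜ 𝕊², IsC1SphereDiffeo fun x => φ (OnePoint.map (⇑f) (φ.symm x))

/-- The commutator loop `t ↦ [f₁^t, f₂^t] = f₁^t ∘ f₂^t ∘ (f₁^t)⁻¹ ∘ (f₂^t)⁻¹`. -/
def commLoop {X : Type*} [TopologicalSpace X] {f₁ f₂ : X ≃ₜ X}
    (I₁ : HIsotopy f₁) (I₂ : HIsotopy f₂) (t : ℝ) : X ≃ₜ X :=
  (I₂.F t).symm.trans ((I₁.F t).symm.trans ((I₂.F t).trans (I₁.F t)))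

/-- The invariant `W(f₁,f₂)` vanishes: for isotopies from the identity to
`f₁`, `f₂`, the commutator loop is null-homotopic (rel basepoint) in the group
of homeomorphisms. -/
def WVanishes {X : Type*} [TopologicalSpace X] (f₁ f₂ : X ≃ₜ X) : Prop :=
  ∃ (I₁ : HIsotopy f₁) (I₂ : HIsotopy f₂) (H : ℝ → ℝ → X ≃ₜ X),
    Continuous (fun p : (ℝ × ℝ) × X => H p.1.1 p.1.2 p.2) ∧
    Continuous (fun p : (ℝ × ℝ) × X => (H p.1.1 p.1.2).symm p.2) ∧
    (∀ t, H 0 t = commLoop I₁ I₂ t) ∧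
    (∀ t, H 1 t = Homeomorph.refl X) ∧
    (∀ s, H s 0 = Homeomorph.refl X) ∧
    (∀ s, H s 1 = Homeomorph.refl X)

/-- The shorter great-circle arc joining `p` to `z` on the unit sphere
(for `z` neither `p` nor its antipode): the points of the sphere which are
nonnegative linear combinations of `p` and `z`. -/
def minorArcS (p z : 𝕊²) : Set 𝕊² :=
  {x | ∃ a b : ℝ, 0 ≤ a ∧ 0 ≤ b ∧
    (x : EuclideanSpace ℝ (Fin 3)) =
      a • (p : EuclideanSpace ℝ (Fin 3)) + b • (z : EuclideanSpace ℝ (Fin 3))}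

/-- The longer great-circle arc joining `p` to `z` on the unit sphere. -/
def majorArcS (p z : 𝕊²) : Set 𝕊² :=
  {x | ∃ a b : ℝ, (a ≤ 0 ∨ b ≤ 0) ∧
    (x : EuclideanSpace ℝ (Fin 3)) =
      a • (p : EuclideanSpace ℝ (Fin 3)) + b • (z : EuclideanSpace ℝ (Fin 3))}



/-- A continuous function whose exponential is constant on a preconnected set is constant there. -/
theorem constOn_of_exp {A : Type*} [TopologicalSpace A] {S : Set A} (hS : IsPreconnected S)
    {F : A → ℂ} (hF : ContinuousOn F S) {c : ℂ} (h : ∀ x ∈ S, Complex.exp (F x) = c)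
    {x y : A} (hx : x ∈ S) (hy : y ∈ S) : F x = F y := by
  refine Complex.isCoveringMap_exp.constOn_of_comp hS hF ?_ hx hy
  intro a ha b hb
  apply Subtype.ext
  change Complex.exp (F a) = Complex.exp (F b)
  rw [h a ha, h b hb]

/-- Homotopy lifting for the exponential. -/
theorem exists_log_homotopy {A : Type*} [TopologicalSpace A] (V : ℝ × A → ℂ)
    (hV : ContinuousOn V (Icc 0 1 ×ˢ univ)) (h0 : ∀ t ∈ Icc (0 : ℝ) 1, ∀ a, V (t, a) ≠ 0)
    (h1 : ∀ a, V (0, a) = 1) :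
    ∃ Θ : ℝ → A → ℂ, Continuous (fun p : ↥(Icc (0 : ℝ) 1) × A => Θ p.1 p.2) ∧
      (∀ t ∈ Icc (0 : ℝ) 1, ∀ a, Complex.exp (Θ t a) = V (t, a)) ∧ ∀ a, Θ 0 a = 0 := by
  have hc : Continuous (fun p : unitInterval × A => V ((p.1 : ℝ), p.2)) := by
    refine hV.comp_continuous (by fun_prop) ?_
    intro p
    exact ⟨p.1.2, mem_univ _⟩
  let H : C(unitInterval × A, {z : ℂ // z ≠ 0}) :=
    ⟨fun p => ⟨V ((p.1 : ℝ), p.2), h0 _ p.1.2 _⟩, hc.subtype_mk _⟩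
  have H0 : ∀ a, H (0, a) = (fun z : ℂ ↦ (⟨_, z.exp_ne_zero⟩ : {z : ℂ // z ≠ 0}))
      ((ContinuousMap.const A (0 : ℂ)) a) := by
    intro a
    apply Subtype.ext
    simp [H, h1]
  let G := Complex.isCoveringMap_exp.liftHomotopy H (ContinuousMap.const A 0) H0
  have G1 := Complex.isCoveringMap_exp.liftHomotopy_lifts H (ContinuousMap.const A 0) H0
  have G0 := Complex.isCoveringMap_exp.liftHomotopy_zero H (ContinuousMap.const A 0) H0
  refine ⟨fun t a => G (Set.projIcc 0 1 zero_le_one t, a), ?_, ?_, ?_⟩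
  · have : (fun p : ↥(Icc (0 : ℝ) 1) × A =>
        G (Set.projIcc 0 1 zero_le_one (p.1 : ℝ), p.2)) = G := by
      funext p
      simp
    rw [this]
    exact G.continuous
  · intro t ht a
    have := congrArg Subtype.val (congrFun G1 (⟨t, ht⟩, a))
    simp only [Function.comp] at this
    simp only [Set.projIcc_of_mem _ ht]
    exact this
  · intro a
    have := G0 a
    simp only [Set.projIcc_left]
    exact this

/-- Logarithms on star-convex sets. -/
theorem exists_log_starConvex {E : Type*} [AddCommGroup E] [Module ℝ E] [TopologicalSpace E]
    [ContinuousAdd E] [ContinuousSMul ℝ E] {S : Set E} {c : E} (hc : c ∈ S)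
    (hS : StarConvex ℝ c S) {v : E → ℂ} (hv : ContinuousOn v S) (hne : ∀ x ∈ S, v x ≠ 0) :
    ∃ Θ : E → ℂ, ContinuousOn Θ S ∧ ∀ x ∈ S, Complex.exp (Θ x) = v x := by
  have hmem : ∀ t ∈ Icc (0 : ℝ) 1, ∀ x ∈ S, (1 - t) • c + t • x ∈ S := by
    intro t ht x hx
    exact hS hx (by linarith [ht.2]) ht.1 (by ring)
  obtain ⟨Θ, h1, h2, h3⟩ := exists_log_homotopy (A := S)
    (fun p => v ((1 - p.1) • c + p.1 • (p.2 : E)) / v c) (by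
      refine ContinuousOn.div_const ?_ _
      refine hv.comp (by fun_prop) ?_
      intro p hp
      exact hmem _ hp.1 _ p.2.2) (by
      intro t ht a
      exact div_ne_zero (hne _ (hmem t ht _ a.2)) (hne _ hc)) (by
      intro a
      simp [hne _ hc])
  refine ⟨fun x => if hx : x ∈ S then Θ 1 ⟨x, hx⟩ + Complex.log (v c) else 0, ?_, ?_⟩
  · rw [continuousOn_iff_continuous_domRestrict]
    have : (S.domRestrict fun x => if hx : x ∈ S then Θ 1 ⟨x, hx⟩ + Complex.log (v c) else 0) =
        fun x : S => Θ 1 x + Complex.log (v c) := by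
      funext x
      simp [Set.domRestrict]
    rw [this]
    refine Continuous.add ?_ continuous_const
    exact h1.comp (f := fun x : S => ((⟨1, by simp⟩ : ↥(Icc (0 : ℝ) 1)), x)) (by fun_prop)
  · intro x hx
    simp only [dif_pos hx]
    rw [Complex.exp_add, h2 1 (by simp), Complex.exp_log (hne _ hc)]
    simp only [sub_self, zero_smul, one_smul, zero_add]
    exact div_mul_cancel₀ _ (hne _ hc)

/-- Continuous injective open maps of the plane with a continuous symmetric logarithm of the
difference quotient. -/
structure GoodMap (g : ℂ → ℂ) : Prop where
  cont : Continuous g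
  inj : Function.Injective g
  opn : IsOpenMap g
  lk : ∃ E : ℂ → ℂ → ℂ, ContinuousOn (fun p : ℂ × ℂ => E p.1 p.2) {p | p.1 ≠ p.2} ∧
    (∀ x y, x ≠ y → E x y = E y x) ∧
    ∀ x y, x ≠ y → Complex.exp (E x y) * (x - y) = g x - g y

theorem GoodMap.id : GoodMap (fun x => x) where
  cont := continuous_id
  inj := Function.injective_id
  opn := IsOpenMap.id
  lk := ⟨fun _ _ => 0, continuousOn_const, by simp, by simp⟩

theorem GoodMap.comp {g h : ℂ → ℂ} (hg : GoodMap g) (hh : GoodMap h) :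
    GoodMap (fun x => g (h x)) where
  cont := hg.cont.comp hh.cont
  inj := hg.inj.comp hh.inj
  opn := hg.opn.comp hh.opn
  lk := by
    obtain ⟨E, E1, E2, E3⟩ := hg.lk
    obtain ⟨D, D1, D2, D3⟩ := hh.lk
    refine ⟨fun x y => E (h x) (h y) + D x y, ?_, ?_, ?_⟩
    · refine ContinuousOn.add ?_ D1
      have hc := hh.cont
      refine E1.comp (f := fun p : ℂ × ℂ => (h p.1, h p.2)) (by fun_prop) ?_
      intro p hp
      exact fun h' => hp (hh.inj h')
    · intro x y hxy
      simp only
      rw [E2 _ _ (fun h' => hxy (hh.inj h')), D2 _ _ hxy]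
    · intro x y hxy
      rw [Complex.exp_add, mul_assoc, D3 _ _ hxy, E3 _ _ (fun h' => hxy (hh.inj h'))]

/-- The index computation: a fixed point free good map has no closed curve of the following
type. -/
theorem no_closed_curve {g : ℂ → ℂ} (hg : GoodMap g) (hfix : ∀ x, g x ≠ x)
    {L : ℝ → ℂ} {T w : ℝ} (hL : ContinuousOn L (Icc 0 T)) (hinj : InjOn L (Ico 0 T))
    (hw0 : 0 ≤ w) (hw1 : w < 1) (hT : 2 ≤ T) (hclose : L T = L w)
    (hstep : ∀ s ∈ Icc 0 (T - 1), g (L s) = L (s + 1)) : False := by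
  obtain ⟨E, E1, E2, E3⟩ := hg.lk
  have hgc := hg.cont
  -- distinctness
  have hne : ∀ s t, 0 ≤ s → s < t → t ≤ T → ¬ (s = w ∧ t = T) → L t ≠ L s := by
    intro s t hs hst htT hn he
    rcases lt_or_eq_of_le htT with h | h
    · have := hinj ⟨by linarith, h⟩ ⟨hs, by linarith⟩ he
      linarith
    · subst h
      rw [hclose] at he
      have := hinj (x₁ := w) (x₂ := s) ⟨hw0, by linarith⟩ ⟨hs, by linarith⟩ he
      exact hn ⟨this.symm, rfl⟩
  -- logs
  obtain ⟨Ξ, X1, X2⟩ := exists_log_starConvex (E := ℂ) (S := univ) (c := 0) (mem_univ _)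
    (starConvex_univ _) (v := fun z => g z - z) (by fun_prop) (fun x _ => sub_ne_zero.2 (hfix x))
  rw [continuousOn_univ] at X1
  let S : Set (ℝ × ℝ) := {p | 0 ≤ p.1 ∧ p.1 < p.2 ∧ p.2 ≤ T ∧ ¬ (p.1 = w ∧ p.2 = T)}
  have hLS1 : ContinuousOn (fun p : ℝ × ℝ => L p.1) S :=
    hL.comp (by fun_prop) (fun p hp => ⟨hp.1, by linarith [hp.2.1, hp.2.2.1]⟩)
  have hLS2 : ContinuousOn (fun p : ℝ × ℝ => L p.2) S :=
    hL.comp (by fun_prop) (fun p hp => ⟨by linarith [hp.2.1, hp.1], hp.2.2.1⟩)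
  obtain ⟨Θ, T1, T2⟩ := exists_log_starConvex (E := ℝ × ℝ) (S := S) (c := (0, 1))
    ⟨le_refl _, by norm_num, by simp; linarith, by simp; intro _; linarith⟩ (by
      rintro ⟨s, t⟩ ⟨h1, h2, h3, h4⟩ a b ha hb hab
      simp only at h1 h2 h3 h4
      rcases eq_or_lt_of_le ha with h | h
      · have : b = 1 := by linarith
        subst this
        simp [← h]
        exact ⟨h1, h2, h3, h4⟩
      · have hb' : b = 1 - a := by linarith
        subst hb'
        have h5 : a * 1 + (1 - a) * t < T := by nlinarith
        refine ⟨?_, ?_, ?_, ?_⟩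
        · simp; positivity
        · simp; nlinarith
        · simp; linarith
        · simp; intro _; linarith) (v := fun p => L p.2 - L p.1) (hLS2.sub hLS1)
    (fun p hp => sub_ne_zero.2 (hne _ _ hp.1 hp.2.1 hp.2.2.1 hp.2.2.2))
  -- first comparison
  have C1 : ∀ s ∈ Icc 0 (T - 1), ∀ t ∈ Icc 0 (T - 1),
      Ξ (L s) - Θ (s, s + 1) = Ξ (L t) - Θ (t, t + 1) := by
    intro s hs t ht
    have hm : ∀ s ∈ Icc 0 (T - 1), (s, s + 1) ∈ S := by
      intro s hs
      exact ⟨hs.1, by simp, by simp; linarith [hs.2], by simp; intro h; linarith⟩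
    refine constOn_of_exp (S := Icc 0 (T - 1)) (F := fun s => Ξ (L s) - Θ (s, s + 1))
      isPreconnected_Icc ?_ (c := 1) ?_ hs ht
    · refine ContinuousOn.sub ?_ ?_
      · exact X1.comp_continuousOn (hL.mono (Icc_subset_Icc_right (by linarith)))
      · exact T1.comp (f := fun s : ℝ => (s, s + 1)) (by fun_prop) hm
    · intro x hx
      rw [Complex.exp_sub, X2 _ (mem_univ _), T2 _ (hm x hx)]
      simp only
      rw [hstep x hx]
      exact div_self (sub_ne_zero.2 (hne _ _ (hm x hx).1 (hm x hx).2.1 (hm x hx).2.2.1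
        (hm x hx).2.2.2))
  -- second comparison
  have hm2 : ∀ s ∈ Icc (T - 1) T, (s - 1, s) ∈ S := by
    intro s hs
    exact ⟨by simp; linarith [hs.1], by simp, hs.2, by simp; intro h; linarith [hs.1, hs.2]⟩
  have hd2 : ∀ s ∈ Icc (T - 1) T, L s ≠ L (s - 1) := by
    intro s hs
    have := hm2 s hs
    exact hne _ _ this.1 this.2.1 this.2.2.1 this.2.2.2
  have C2 : Ξ (L (T - 1)) - E (L (T - 1)) (L (T - 1 - 1)) - Θ (T - 1 - 1, T - 1) =
      Ξ (L T) - E (L T) (L (T - 1)) - Θ (T - 1, T) := by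
    refine constOn_of_exp (S := Icc (T - 1) T)
      (F := fun s => Ξ (L s) - E (L s) (L (s - 1)) - Θ (s - 1, s))
      isPreconnected_Icc ?_ (c := 1) ?_ ⟨le_refl _, by linarith⟩ ⟨by linarith, le_refl _⟩
    · have hL1 : ContinuousOn L (Icc (T - 1) T) := hL.mono (Icc_subset_Icc_left (by linarith))
      have hL2 : ContinuousOn (fun s => L (s - 1)) (Icc (T - 1) T) :=
        hL.comp (by fun_prop) (fun s hs => ⟨by linarith [hs.1], by linarith [hs.2]⟩)
      refine ContinuousOn.sub (ContinuousOn.sub ?_ ?_) ?_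
      · exact X1.comp_continuousOn hL1
      · exact E1.comp (f := fun s : ℝ => (L s, L (s - 1))) (hL1.prodMk hL2) hd2
      · exact T1.comp (f := fun s : ℝ => (s - 1, s)) (by fun_prop) hm2
    · intro x hx
      rw [Complex.exp_sub, Complex.exp_sub, X2 _ (mem_univ _), T2 _ (hm2 x hx)]
      simp only
      have h1 := E3 _ _ (hd2 x hx)
      have h2 : g (L (x - 1)) = L x := by
        rw [hstep _ ⟨by linarith [hx.1], by linarith [hx.2]⟩]
        simp
      rw [h2] at h1
      rw [← h1]
      have := sub_ne_zero.2 (hd2 x hx)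
      have := Complex.exp_ne_zero (E (L x) (L (x - 1)))
      field_simp
  -- third comparison
  have C3 : E (L (T - 1)) (L (T - 1 - 1)) - Θ (T - 1 - 1 + 1, T - 1 + 1) + Θ (T - 1 - 1, T - 1) =
      E (L (T - 1)) (L w) - Θ (w + 1, T - 1 + 1) + Θ (w, T - 1) := by
    let R : Set (ℝ × ℝ) := {p | 0 ≤ p.1 ∧ p.1 < p.2 ∧ p.2 ≤ T - 1}
    have hR : Convex ℝ R := by
      have h1 : Convex ℝ {p : ℝ × ℝ | 0 ≤ p.1} :=
        convex_halfSpace_ge (f := Prod.fst) ⟨fun _ _ => rfl, fun _ _ => rfl⟩ 0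
      have h2 : Convex ℝ {p : ℝ × ℝ | p.1 - p.2 < 0} :=
        convex_halfSpace_lt (f := fun p : ℝ × ℝ => p.1 - p.2)
          ⟨fun _ _ => by simp; ring, fun _ _ => by simp; ring⟩ 0
      have h3 : Convex ℝ {p : ℝ × ℝ | p.2 ≤ T - 1} :=
        convex_halfSpace_le (f := Prod.snd) ⟨fun _ _ => rfl, fun _ _ => rfl⟩ _
      have : R = {p : ℝ × ℝ | 0 ≤ p.1} ∩ ({p : ℝ × ℝ | p.1 - p.2 < 0} ∩
          {p : ℝ × ℝ | p.2 ≤ T - 1}) := by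
        ext p
        simp [R]
      rw [this]
      exact h1.inter (h2.inter h3)
    have hRS : ∀ p ∈ R, p ∈ S := by
      rintro p ⟨h1, h2, h3⟩
      exact ⟨h1, h2, by linarith, fun h => by linarith [h.2]⟩
    have hRS' : ∀ p ∈ R, (p.1 + 1, p.2 + 1) ∈ S := by
      rintro p ⟨h1, h2, h3⟩
      exact ⟨by simp; linarith, by simp; linarith, by simp; linarith,
        fun h => by simp at h; linarith [h.1]⟩
    have hdR : ∀ p ∈ R, L p.2 ≠ L p.1 := by
      intro p hp
      have := hRS p hp
      exact hne _ _ this.1 this.2.1 this.2.2.1 this.2.2.2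
    refine constOn_of_exp (S := R)
      (F := fun p => E (L p.2) (L p.1) - Θ (p.1 + 1, p.2 + 1) + Θ p)
      (x := (T - 1 - 1, T - 1)) (y := (w, T - 1)) hR.isPreconnected ?_ (c := 1) ?_ ?_ ?_
    · refine ContinuousOn.add (ContinuousOn.sub ?_ ?_) (T1.mono hRS)
      · exact E1.comp (f := fun p : ℝ × ℝ => (L p.2, L p.1))
          ((hLS2.mono hRS).prodMk (hLS1.mono hRS)) hdR
      · exact T1.comp (f := fun p : ℝ × ℝ => (p.1 + 1, p.2 + 1)) (by fun_prop) hRS'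
    · intro p hp
      rw [Complex.exp_add, Complex.exp_sub, T2 _ (hRS p hp), T2 _ (hRS' p hp)]
      simp only
      have h1 := E3 _ _ (hdR p hp)
      have hs := hRS' p hp
      have h4 := sub_ne_zero.2 (hne _ _ hs.1 hs.2.1 hs.2.2.1 hs.2.2.2)
      simp only at h4
      rw [hstep p.2 ⟨by linarith [hp.1, hp.2.1], hp.2.2⟩,
        hstep p.1 ⟨hp.1, by linarith [hp.2.1, hp.2.2]⟩] at h1
      rw [div_mul_eq_mul_div, h1, div_self h4]
    · exact ⟨by simp; linarith, by simp, by simp⟩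
    · exact ⟨hw0, by simp; linarith, by simp⟩
  -- fourth
  have hmA : ∀ s ∈ Ioo w T, (s, T) ∈ S := fun s hs =>
    ⟨by simp; linarith [hs.1], hs.2, le_refl _, fun h => by simp at h; linarith [hs.1]⟩
  have hmB : ∀ s ∈ Ioo w T, (w, s) ∈ S := fun s hs =>
    ⟨hw0, hs.1, hs.2.le, fun h => by simp at h; linarith [hs.2]⟩
  have hk : ∀ s ∈ Ioo w T, Complex.exp (Θ (s, T) - Θ (w, s)) = -1 := by
    intro s hs
    rw [Complex.exp_sub, T2 _ (hmA s hs), T2 _ (hmB s hs)]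
    simp only
    rw [hclose, ← neg_sub (L s) (L w), neg_div, div_self]
    have := hmB s hs
    exact (sub_ne_zero.2 (hne _ _ this.1 this.2.1 this.2.2.1 this.2.2.2))
  have C4 : Θ (w + 1, T) - Θ (w, w + 1) = Θ (T - 1, T) - Θ (w, T - 1) := by
    refine constOn_of_exp (S := Ioo w T) (F := fun s => Θ (s, T) - Θ (w, s))
      isPreconnected_Ioo ?_ (c := -1) hk ⟨by linarith, by linarith⟩ ⟨by linarith, by linarith⟩
    exact (T1.comp (f := fun s : ℝ => (s, T)) (by fun_prop) hmA).sub
      (T1.comp (f := fun s : ℝ => (w, s)) (by fun_prop) hmB)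
  have e1 : T - 1 + 1 = T := by ring
  have e2 : T - 1 - 1 + 1 = T - 1 := by ring
  have C1' := C1 (T - 1) ⟨by linarith, le_refl _⟩ w ⟨hw0, by linarith⟩
  rw [e1, e2] at C3
  rw [e1] at C1'
  rw [hclose] at C2
  have hsym : E (L w) (L (T - 1)) = E (L (T - 1)) (L w) := by
    apply E2
    have := hd2 T ⟨by linarith, le_refl _⟩
    rwa [hclose] at this
  have hfin : Θ (w + 1, T) - Θ (w, w + 1) = 0 := by
    have h2 : (2 : ℂ) * (Θ (w + 1, T) - Θ (w, w + 1)) = 0 := by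
      linear_combination (-1 : ℂ) * C1' + C2 + C3 - hsym + C4
    simpa using h2
  have := hk (w + 1) ⟨by linarith, by linarith⟩
  rw [hfin, Complex.exp_zero] at this
  norm_num at this

/-- Existence of a translation arc through a given point. -/
theorem exists_translation_arc {g : ℂ → ℂ} (hg : GoodMap g) (hfix : ∀ x, g x ≠ x) (x : ℂ) :
    ∃ α : ℝ → ℂ, Continuous α ∧ α (1 / 2) = x ∧ α 1 = g (α 0) ∧ InjOn α (Icc 0 1) ∧
      ∀ s ∈ Icc (0 : ℝ) 1, ∀ t ∈ Ioo (0 : ℝ) 1, α s ≠ g (α t) := by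
  have hgc := hg.cont
  obtain ⟨p, hp⟩ := Continuous.exists_forall_le (f := fun y : ℂ => max ‖y - x‖ ‖g y - x‖)
    (by fun_prop) (by
      refine tendsto_atTop_mono (f := fun y => ‖y - x‖) (fun y => le_max_left _ _) ?_
      exact (tendsto_norm_cocompact_atTop (E := ℂ)).comp
        ((Homeomorph.subRight x).isClosedEmbedding.tendsto_cocompact))
  set r := max ‖p - x‖ ‖g p - x‖ with hr
  have hrpos : 0 < r := by
    rcases lt_or_eq_of_le (le_trans (norm_nonneg (p - x)) (le_max_left _ ‖g p - x‖)) with h | h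
    · exact h
    · exfalso
      have h1 : ‖p - x‖ ≤ 0 := by rw [h]; exact le_max_left _ _
      have h2 : ‖g p - x‖ ≤ 0 := by rw [h]; exact le_max_right _ _
      have h1' := sub_eq_zero.1 (norm_le_zero_iff.1 h1)
      have h2' := sub_eq_zero.1 (norm_le_zero_iff.1 h2)
      exact hfix p (h2'.trans h1'.symm)
  have F : ∀ y, ‖y - x‖ < r → ‖g y - x‖ < r → False := by
    intro y h1 h2
    exact absurd (hp y) (not_le.2 (max_lt h1 h2))
  have hcl : ∀ y, ‖y - x‖ ≤ r → y ∈ closure (ball x r) := by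
    intro y hy
    rw [closure_ball x hrpos.ne', mem_closedBall, dist_eq_norm]
    exact hy
  have F1 : ∀ y, ‖y - x‖ < r → ¬ ‖g y - x‖ ≤ r := by
    intro y h1 h2
    have ho := hg.opn _ (isOpen_ball (x := x) (ε := r))
    obtain ⟨z, ⟨y', hy', rfl⟩, hz⟩ := mem_closure_iff.1 (hcl _ h2) _ ho
      ⟨y, by rwa [mem_ball, dist_eq_norm], rfl⟩
    rw [mem_ball, dist_eq_norm] at hz hy'
    exact F y' hy' hz
  have F2 : ∀ y, ‖y - x‖ ≤ r → ¬ ‖g y - x‖ < r := by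
    intro y h1 h2
    have ho := (isOpen_ball (x := x) (ε := r)).preimage hgc
    obtain ⟨z, hz, hz'⟩ := mem_closure_iff.1 (hcl _ h1) _ ho (by
      rwa [mem_preimage, mem_ball, dist_eq_norm])
    rw [mem_preimage, mem_ball, dist_eq_norm] at hz
    rw [mem_ball, dist_eq_norm] at hz'
    exact F z hz' hz
  have hpr : ‖p - x‖ = r :=
    le_antisymm (le_max_left _ _) (not_lt.1 fun h => F1 p h (le_max_right _ _))
  have hgpr : ‖g p - x‖ = r :=
    le_antisymm (le_max_right _ _) (not_lt.1 fun h => F2 p (le_max_left _ _) h)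
  let α : ℝ → ℂ := fun u =>
    x + ((max (1 - 2 * u) 0 : ℝ) : ℂ) * (p - x) + ((max (2 * u - 1) 0 : ℝ) : ℂ) * (g p - x)
  have a1 : ∀ u, u ≤ 1 / 2 → α u = x + ((1 - 2 * u : ℝ) : ℂ) * (p - x) := by
    intro u hu
    simp only [α]
    rw [max_eq_left (by linarith), max_eq_right (by linarith)]
    simp
  have a2 : ∀ u, 1 / 2 ≤ u → α u = x + ((2 * u - 1 : ℝ) : ℂ) * (g p - x) := by
    intro u hu
    simp only [α]
    rw [max_eq_right (by linarith), max_eq_left (by linarith)]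
    simp
  have an : ∀ u, ‖α u - x‖ = |1 - 2 * u| * r := by
    intro u
    rcases le_total u (1 / 2) with h | h
    · rw [a1 u h, add_sub_cancel_left, norm_mul, hpr, Complex.norm_real, Real.norm_eq_abs]
    · rw [a2 u h, add_sub_cancel_left, norm_mul, hgpr, Complex.norm_real, Real.norm_eq_abs,
        abs_sub_comm]
  have e0 : α 0 = p := by rw [a1 0 (by norm_num)]; simp
  refine ⟨α, ?_, ?_, ?_, ?_, ?_⟩
  · fun_prop
  · rw [a1 _ (le_refl _)]; simp
  · rw [e0, a2 1 (by norm_num)]; norm_num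
  · intro u hu v hv huv
    have key : ∀ u v : ℝ, u < v → α u = α v → False := by
      intro u v hlt huv
      have h1 := an u
      rw [huv, an v] at h1
      have h2 := mul_right_cancel₀ hrpos.ne' h1
      rcases (abs_eq_abs.1 h2) with h | h
      · linarith
      · have hv' : v = 1 - u := by linarith
        subst hv'
        rw [a1 u (by linarith), a2 (1 - u) (by linarith)] at huv
        have h3 : (2 * (1 - u) - 1 : ℝ) = 1 - 2 * u := by ring
        rw [h3] at huv
        have h4 := add_left_cancel huv
        have h5 : ((1 - 2 * u : ℝ) : ℂ) ≠ 0 := by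
          rw [Complex.ofReal_ne_zero]; linarith
        have h6 := mul_left_cancel₀ h5 h4
        exact hfix p (sub_left_injective h6).symm
    rcases lt_trichotomy u v with h | h | h
    · exact (key u v h huv).elim
    · exact h
    · exact (key v u h huv.symm).elim
  · intro s hs t ht h
    refine F1 (α t) ?_ ?_
    · rw [an]
      have : |1 - 2 * t| < 1 := abs_lt.2 ⟨by linarith [ht.2], by linarith [ht.1]⟩
      nlinarith
    · rw [← h, an]
      have : |1 - 2 * s| ≤ 1 := abs_le.2 ⟨by linarith [hs.2], by linarith [hs.1]⟩
      nlinarith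

/-- Brouwer's lemma: a fixed point free good map has no periodic point. -/
theorem no_periodic {g : ℂ → ℂ} (hg : GoodMap g) (hfix : ∀ x, g x ≠ x) (x : ℂ) (n : ℕ)
    (hn : 0 < n) (hx : g^[n] x = x) : False := by
  obtain ⟨α, hα, hαx, hα1, hαi, hαg⟩ := exists_translation_arc hg hfix x
  have hgc := hg.cont
  let L : ℝ → ℂ := fun s => g^[⌊s⌋₊] (α (s - ⌊s⌋₊))
  have L1 : ∀ s, 0 ≤ s → ∀ k : ℕ, L (s + k) = g^[k] (L s) := by
    intro s hs k
    simp only [L]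
    rw [Nat.floor_add_natCast hs, add_comm _ k, Function.iterate_add_apply]
    congr 3
    push_cast
    ring
  have L1' : ∀ s, 0 ≤ s → L (s + 1) = g (L s) := by
    intro s hs
    have := L1 s hs 1
    simpa using this
  have L0 : ∀ s ∈ Icc (0 : ℝ) 1, L s = α s := by
    intro s hs
    rcases lt_or_eq_of_le hs.2 with h | h
    · have : ⌊s⌋₊ = 0 := Nat.floor_eq_zero.2 h
      simp [L, this]
    · subst h
      simp [L, hα1]
  have Lk : ∀ k : ℕ, ∀ s ∈ Icc (k : ℝ) (k + 1), L s = g^[k] (α (s - k)) := by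
    intro k s hs
    have := L1 (s - k) (by linarith [hs.1]) k
    rw [sub_add_cancel] at this
    rw [this, L0 _ ⟨by linarith [hs.1], by linarith [hs.2]⟩]
  have Lc : ∀ k : ℕ, ContinuousOn L (Icc 0 (k : ℝ)) := by
    intro k
    induction k with
    | zero => simp
    | succ k ih =>
      have h1 : ContinuousOn L (Icc (k : ℝ) (k + 1)) := by
        refine ContinuousOn.congr (f := fun s => g^[k] (α (s - k))) ?_ (Lk k)
        have := hgc.iterate k
        exact (this.comp (hα.comp (by fun_prop))).continuousOn
      have h2 := ih.union_of_isClosed h1 isClosed_Icc isClosed_Icc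
      rw [Icc_union_Icc_eq_Icc (by positivity) (by linarith)] at h2
      push_cast
      exact h2
  have Li2 : ∀ s t, 0 ≤ s → s < t → t < 2 → L s ≠ L t := by
    intro s t hs hst ht he
    rcases le_or_gt t 1 with h1 | h1
    · rw [L0 s ⟨hs, by linarith⟩, L0 t ⟨by linarith, h1⟩] at he
      have := hαi ⟨hs, by linarith⟩ ⟨by linarith, h1⟩ he
      linarith
    · have ht1 : L t = g (L (t - 1)) := by
        have := L1' (t - 1) (by linarith)
        rwa [sub_add_cancel] at this
      rcases le_or_gt s 1 with h2 | h2
      · rw [ht1, L0 s ⟨hs, h2⟩, L0 (t - 1) ⟨by linarith, by linarith⟩] at he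
        exact hαg s ⟨hs, h2⟩ (t - 1) ⟨by linarith, by linarith⟩ he
      · have hs1 : L s = g (L (s - 1)) := by
          have := L1' (s - 1) (by linarith)
          rwa [sub_add_cancel] at this
        rw [ht1, hs1] at he
        have he' := hg.inj he
        rw [L0 (s - 1) ⟨by linarith, by linarith⟩, L0 (t - 1) ⟨by linarith, by linarith⟩] at he'
        have := hαi ⟨by linarith, by linarith⟩ ⟨by linarith, by linarith⟩ he'
        linarith
  have Lgap : ∀ s t, 0 ≤ s → s < t → L s = L t → s + 1 ≤ t := by
    intro s t hs hst he
    by_contra hlt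
    push Not at hlt
    have h1 := Nat.floor_le hs
    have h2 := Nat.lt_floor_add_one s
    have h3 := L1 (s - ⌊s⌋₊) (by linarith) ⌊s⌋₊
    have h4 := L1 (t - ⌊s⌋₊) (by linarith) ⌊s⌋₊
    rw [sub_add_cancel] at h3 h4
    rw [h3, h4] at he
    exact Li2 _ _ (by linarith) (by linarith) (by linarith) (hg.inj.iterate _ he)
  let K0 : Set (ℝ × ℝ) := (Icc 0 ((n + 1 : ℕ) : ℝ) ×ˢ Icc 0 ((n + 1 : ℕ) : ℝ)) ∩
    {p | p.1 + 1 ≤ p.2}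
  have hK0 : IsCompact K0 := (isCompact_Icc.prod isCompact_Icc).inter_right
    (isClosed_le (by fun_prop) (by fun_prop))
  let K : Set (ℝ × ℝ) := K0 ∩ (fun p : ℝ × ℝ => L p.1 - L p.2) ⁻¹' {0}
  have hcK : ContinuousOn (fun p : ℝ × ℝ => L p.1 - L p.2) K0 :=
    ((Lc (n + 1)).comp (by fun_prop) (fun p hp => hp.1.1)).sub
      ((Lc (n + 1)).comp (by fun_prop) (fun p hp => hp.1.2))
  have hK : IsCompact K := by
    refine hK0.of_isClosed_subset ?_ inter_subset_left
    exact hcK.preimage_isClosed_of_isClosed hK0.isClosed isClosed_singleton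
  have hn1 : (1 : ℝ) ≤ n := by exact_mod_cast hn
  have hKne : K.Nonempty := by
    refine ⟨(1 / 2, 1 / 2 + n), ⟨⟨⟨by norm_num, ?_⟩, ⟨by positivity, ?_⟩⟩, ?_⟩, ?_⟩
    · push_cast; norm_num; linarith
    · push_cast; norm_num; linarith
    · simp only [mem_ofPred_eq]; linarith
    · simp only [mem_preimage, mem_singleton_iff]
      rw [L1 (1 / 2) (by norm_num), L0 (1 / 2) ⟨by norm_num, by norm_num⟩, hαx, hx, sub_self]
  obtain ⟨⟨w, T⟩, ⟨⟨⟨⟨hw0, hwn⟩, ⟨hT0, hTn⟩⟩, hwT⟩, hLe⟩, hmin⟩ :=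
    hK.exists_isMinOn hKne (f := Prod.snd) continuous_snd.continuousOn
  simp only [mem_ofPred_eq, mem_preimage, mem_singleton_iff] at hw0 hwn hT0 hTn hwT hLe
  rw [sub_eq_zero] at hLe
  have hmin' : ∀ s t, 0 ≤ s → s < t → t < T → L s ≠ L t := by
    intro s t hs hst ht he
    have h1 := Lgap s t hs hst he
    have : (s, t) ∈ K := ⟨⟨⟨⟨hs, by linarith⟩, ⟨by linarith, by linarith⟩⟩, h1⟩, by
      simp [he]⟩
    have := hmin this
    simp only [mem_ofPred_eq] at this
    linarith
  have hT2 : 2 ≤ T := by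
    by_contra h
    exact Li2 w T hw0 (by linarith) (by linarith) hLe
  have hw1 : w < 1 := by
    by_contra h
    push Not at h
    have h3 := L1' (w - 1) (by linarith)
    have h4 := L1' (T - 1) (by linarith)
    rw [sub_add_cancel] at h3 h4
    rw [h3, h4] at hLe
    exact hmin' (w - 1) (T - 1) (by linarith) (by linarith) (by linarith) (hg.inj hLe)
  refine no_closed_curve hg hfix (L := L) (T := T) (w := w)
    ((Lc (n + 1)).mono (Icc_subset_Icc_right hTn)) ?_ hw0 hw1 hT2 hLe.symm
    (fun s hs => (L1' s hs.1).symm)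
  intro s hs t ht he
  rcases lt_trichotomy s t with h | h | h
  · exact (hmin' s t hs.1 h ht.2 he).elim
  · exact h
  · exact (hmin' t s ht.1 h hs.2 he.symm).elim

/-- Pushing a point inside a ball. -/
theorem push_ball (a b : ℂ) (R : ℝ) (hR : ‖b - a‖ < R) :
    ∃ φ : ℂ → ℂ, GoodMap φ ∧ φ a = b ∧ ∀ z, z ∉ ball a R → φ z = z := by
  have hRpos : 0 < R := lt_of_le_of_lt (norm_nonneg _) hR
  let χ : ℂ → ℝ := fun z => max 0 (1 - ‖z - a‖ / R)
  have hχ : ∀ x y, |χ x - χ y| ≤ ‖x - y‖ / R := by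
    intro x y
    have h1 : |χ x - χ y| ≤ |(1 - ‖x - a‖ / R) - (1 - ‖y - a‖ / R)| := by
      have := abs_max_sub_max_le_abs (1 - ‖x - a‖ / R) (1 - ‖y - a‖ / R) 0
      simp only [χ]
      rwa [max_comm 0, max_comm 0]
    refine h1.trans ?_
    have h2 : (1 - ‖x - a‖ / R) - (1 - ‖y - a‖ / R) = (‖y - a‖ - ‖x - a‖) / R := by ring
    rw [h2, abs_div, abs_of_pos hRpos]
    gcongr
    have := abs_norm_sub_norm_le (y - a) (x - a)
    rw [sub_sub_sub_cancel_right, norm_sub_rev y x] at this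
    exact this
  let φ : ℂ → ℂ := fun z => z + (χ z : ℂ) * (b - a)
  let c : ℝ := ‖b - a‖ / R
  have hc0 : 0 ≤ c := by positivity
  have hc1 : c < 1 := (div_lt_one hRpos).2 hR
  have hφ : ∀ x y, ‖φ x - φ y - (x - y)‖ ≤ c * ‖x - y‖ := by
    intro x y
    have h1 : φ x - φ y - (x - y) = ((χ x - χ y : ℝ) : ℂ) * (b - a) := by
      simp only [φ]
      push_cast
      ring
    rw [h1, norm_mul, Complex.norm_real, Real.norm_eq_abs]
    calc |χ x - χ y| * ‖b - a‖ ≤ ‖x - y‖ / R * ‖b - a‖ := by gcongr; exact hχ x y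
      _ = c * ‖x - y‖ := by simp only [c]; ring
  have hcont : Continuous φ := by fun_prop
  have happ : ApproximatesLinearOn φ ((ContinuousLinearEquiv.refl ℝ ℂ : ℂ ≃L[ℝ] ℂ) : ℂ →L[ℝ] ℂ)
      univ ⟨c, hc0⟩ := by
    intro x _ y _
    exact hφ x y
  have hN : Subsingleton ℂ ∨ (⟨c, hc0⟩ : NNReal) <
      ‖((ContinuousLinearEquiv.refl ℝ ℂ).symm : ℂ →L[ℝ] ℂ)‖₊⁻¹ := by
    right
    have h1 : ‖((ContinuousLinearEquiv.refl ℝ ℂ).symm : ℂ →L[ℝ] ℂ)‖₊ = 1 := by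
      apply NNReal.eq
      exact ContinuousLinearMap.norm_id (𝕜 := ℝ) (E := ℂ)
    rw [h1, inv_one]
    exact hc1
  let e := happ.toHomeomorph φ hN
  have he : ⇑e = φ := rfl
  have hinj : Function.Injective φ := he ▸ e.injective
  have hopn : IsOpenMap φ := he ▸ e.isOpenMap
  have hratio : ∀ x y, x ≠ y → (φ x - φ y) / (x - y) ∈ Complex.slitPlane := by
    intro x y hxy
    have h0 := sub_ne_zero.2 hxy
    have h1 : ‖(φ x - φ y) / (x - y) - 1‖ < 1 := by
      rw [div_sub_one h0, norm_div, div_lt_one (norm_pos_iff.2 h0)]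
      refine lt_of_le_of_lt (hφ x y) ?_
      have := norm_pos_iff.2 h0
      nlinarith
    left
    have h2 := lt_of_le_of_lt (Complex.abs_re_le_norm _) h1
    rw [abs_lt] at h2
    simp only [Complex.sub_re, Complex.one_re] at h2
    linarith [h2.1]
  refine ⟨φ, ⟨hcont, hinj, hopn, fun x y => Complex.log ((φ x - φ y) / (x - y)), ?_, ?_, ?_⟩,
    ?_, ?_⟩
  · refine ContinuousOn.clog ?_ (fun p hp => hratio _ _ hp)
    refine ContinuousOn.div (by fun_prop) (by fun_prop) (fun p hp => sub_ne_zero.2 hp)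
  · intro x y _
    simp only
    rw [← neg_sub (φ y), ← neg_sub y, neg_div_neg_eq]
  · intro x y hxy
    rw [Complex.exp_log (Complex.slitPlane_ne_zero (hratio x y hxy))]
    exact div_mul_cancel₀ _ (sub_ne_zero.2 hxy)
  · simp [φ, χ]
  · intro z hz
    rw [mem_ball, dist_eq_norm, not_lt] at hz
    have : χ z = 0 := by
      simp only [χ]
      apply max_eq_left
      rw [sub_nonpos]
      exact (one_le_div hRpos).2 hz
    simp [φ, this]

/-- Pushing a point inside a connected open set. -/
theorem push_conn {D : Set ℂ} (hD : IsOpen D) (hDc : IsPreconnected D) {a b : ℂ} (ha : a ∈ D)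
    (hb : b ∈ D) : ∃ φ : ℂ → ℂ, GoodMap φ ∧ φ a = b ∧ ∀ z, z ∉ D → φ z = z := by
  let S : Set ℂ := {b | b ∈ D ∧ ∃ φ : ℂ → ℂ, GoodMap φ ∧ φ a = b ∧ ∀ z, z ∉ D → φ z = z}
  have hstep : ∀ x ∈ S, ∀ y R, ball x R ⊆ D → ‖y - x‖ < R → y ∈ S := by
    rintro x ⟨hx, φ, h1, h2, h3⟩ y R hR hy
    obtain ⟨ψ, k1, k2, k3⟩ := push_ball x y R hy
    refine ⟨hR (by rwa [mem_ball, dist_eq_norm]), fun z => ψ (φ z), k1.comp h1, ?_, ?_⟩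
    · simp only
      rw [h2, k2]
    · intro z hz
      simp only
      rw [h3 z hz, k3 z (fun h => hz (hR h))]
  have hSo : IsOpen S := by
    rw [Metric.isOpen_iff]
    intro x hx
    obtain ⟨R, hR, hRD⟩ := Metric.isOpen_iff.1 hD x hx.1
    refine ⟨R, hR, fun y hy => hstep x hx y R hRD ?_⟩
    rwa [mem_ball, dist_eq_norm] at hy
  have hsub : D ⊆ S := by
    refine hDc.subset_of_closure_inter_subset hSo ⟨a, ha, ha, fun z => z, GoodMap.id, rfl,
      fun _ _ => rfl⟩ ?_
    rintro y ⟨hy, hyD⟩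
    obtain ⟨R, hR, hRD⟩ := Metric.isOpen_iff.1 hD y hyD
    obtain ⟨x, hx, hxy⟩ := Metric.mem_closure_iff.1 hy (R / 2) (by linarith)
    refine hstep x hx y (R / 2) ?_ (by rwa [dist_eq_norm] at hxy)
    refine Subset.trans ?_ hRD
    intro z hz
    rw [mem_ball] at hz ⊢
    have := dist_triangle z x y
    rw [dist_comm] at hxy
    linarith
  exact (hsub hb).2

/-- Pushing points in finitely many disjoint connected open sets. -/
theorem push_family (D : ℕ → Set ℂ) (hD : ∀ a, IsOpen (D a)) (hDc : ∀ a, IsPreconnected (D a))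
    (hdis : ∀ a b z, z ∈ D a → z ∈ D b → a = b) (u v : ℕ → ℂ) (hu : ∀ a, u a ∈ D a)
    (hv : ∀ a, v a ∈ D a) (s : Finset ℕ) :
    ∃ φ : ℂ → ℂ, GoodMap φ ∧ (∀ a ∈ s, φ (u a) = v a) ∧ (∀ a ∈ s, ∀ z ∈ D a, φ z ∈ D a) ∧
      ∀ z, (∀ a ∈ s, z ∉ D a) → φ z = z := by
  induction s using Finset.induction_on with
  | empty => exact ⟨fun z => z, GoodMap.id, by simp, by simp, by simp⟩
  | insert b s hb ih =>
    obtain ⟨φ, h1, h2, h3, h4⟩ := ih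
    obtain ⟨ψ, k1, k2, k3⟩ := push_conn (hD b) (hDc b) (hu b) (hv b)
    have hne : ∀ a ∈ s, ∀ z ∈ D a, z ∉ D b := by
      intro a ha z hz hzb
      rw [hdis a b z hz hzb] at ha
      exact hb ha
    have hψ : ∀ z ∈ D b, ψ z ∈ D b := by
      intro z hz
      by_contra hn
      have := k1.inj (k3 _ hn)
      rw [this] at hn
      exact hn hz
    refine ⟨fun z => ψ (φ z), k1.comp h1, ?_, ?_, ?_⟩
    · intro a ha
      rcases Finset.mem_insert.1 ha with rfl | ha
      · simp only
        rw [h4 (u a) (fun c hc h => hne c hc _ h (hu a)), k2]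
      · simp only
        rw [h2 a ha, k3 _ (hne a ha _ (hv a))]
    · intro a ha z hz
      rcases Finset.mem_insert.1 ha with rfl | ha
      · simp only
        rw [h4 z (fun c hc h => hne c hc _ h hz)]
        exact hψ z hz
      · have := h3 a ha z hz
        simp only
        rw [k3 _ (hne a ha _ this)]
        exact this
    · intro z hz
      simp only
      rw [h4 z (fun a ha => hz a (Finset.mem_insert_of_mem ha)),
        k3 z (hz b (Finset.mem_insert_self _ _))]

theorem iterate_shift {h : ℂ → ℂ} {c : ℂ} (hc : ∀ z, ∀ j : ℤ, h (z + j * c) = h z + j * c)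
    (n : ℕ) (z : ℂ) (j : ℤ) : h^[n] (z + j * c) = h^[n] z + j * c := by
  induction n generalizing z with
  | zero => rfl
  | succ n ih => rw [Function.iterate_succ_apply, Function.iterate_succ_apply, hc, ih]

/-- Among the returns with positive displacement, the shortest one is a first return. -/
theorem first_return {h : ℂ → ℂ} {c : ℂ} (hc : ∀ z, ∀ j : ℤ, h (z + j * c) = h z + j * c)
    {D : Set ℂ} (hex : ∃ n : ℕ, 0 < n ∧ ∃ w ∈ D, ∃ p : ℕ, 0 < p ∧ h^[n] w - p * c ∈ D) :
    ∃ n : ℕ, 0 < n ∧ ∃ w ∈ D, ∃ p : ℕ, 0 < p ∧ h^[n] w - p * c ∈ D ∧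
      ∀ i, 0 < i → i < n → ∀ j : ℤ, h^[i] w - j * c ∉ D := by
  obtain ⟨hn, w, hw, p, hp, hwp⟩ := Nat.find_spec hex
  have hmin := fun m => Nat.find_min hex (m := m)
  set n := Nat.find hex
  refine ⟨n, hn, w, hw, p, hp, hwp, ?_⟩
  intro i hi hin j hj
  rcases lt_or_ge 0 j with h0 | h0
  · refine hmin i hin ⟨hi, w, hw, j.toNat, by omega, ?_⟩
    have : ((j.toNat : ℕ) : ℂ) = (j : ℂ) := by
      have h1 : ((j.toNat : ℕ) : ℤ) = j := Int.toNat_of_nonneg h0.le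
      exact_mod_cast congrArg (Int.cast : ℤ → ℂ) h1
    rw [this]
    exact hj
  · refine hmin (n - i) (by omega) ⟨by omega, _, hj, p + (-j).toNat, by omega, ?_⟩
    have h1 : (((-j).toNat : ℕ) : ℂ) = -(j : ℂ) := by
      have h1 : (((-j).toNat : ℕ) : ℤ) = -j := Int.toNat_of_nonneg (by omega)
      exact_mod_cast congrArg (Int.cast : ℤ → ℂ) h1
    have h2 : h^[i] w - j * c = h^[i] w + ((-j : ℤ) : ℂ) * c := by push_cast; ring
    rw [h2, iterate_shift hc, ← Function.iterate_add_apply, Nat.sub_add_cancel hin.le]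
    convert hwp using 1
    push_cast
    rw [h1]
    ring

/-- Franks' lemma, in the equivariant situation which we need. -/
theorem franks {h : ℂ → ℂ} (hg : GoodMap h) (hfix : ∀ z, h z ≠ z) {c : ℂ}
    (hc : ∀ z, ∀ j : ℤ, h (z + j * c) = h z + j * c)
    {D : Set ℂ} (hD : IsOpen D) (hDc : IsPreconnected D)
    (hdis : ∀ z, ∀ j : ℤ, z ∈ D → z - j * c ∈ D → j = 0)
    (hfree : ∀ z ∈ D, ∀ j : ℤ, h z - j * c ∉ D)
    (hup : ∃ n : ℕ, 0 < n ∧ ∃ w ∈ D, ∃ p : ℕ, 0 < p ∧ h^[n] w - p * c ∈ D)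
    (hdown : ∃ n : ℕ, 0 < n ∧ ∃ w ∈ D, ∃ p : ℕ, 0 < p ∧ h^[n] w + p * c ∈ D) : False := by
  obtain ⟨n1, hn1, w1, hw1, p, hp, hwp, hi1⟩ := first_return hc hup
  obtain ⟨n0, hn0, w0, hw0, q, hq, hwq, hi0⟩ := first_return (c := -c) (h := h) (D := D) (by
    intro z j
    have := hc z (-j)
    push_cast at this
    rw [mul_neg, ← neg_mul]
    exact this) (by
    obtain ⟨n, h1, w, h2, p, h3, h4⟩ := hdown
    refine ⟨n, h1, w, h2, p, h3, ?_⟩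
    rw [mul_neg, sub_neg_eq_add]
    exact h4)
  rw [mul_neg, sub_neg_eq_add] at hwq
  let B : ℕ → Set ℂ := fun a => (fun z => z - a * c) ⁻¹' D
  have hB : ∀ a z, z ∈ B a ↔ z - a * c ∈ D := fun a z => Iff.rfl
  have hBo : ∀ a, IsOpen (B a) := fun a => hD.preimage (by fun_prop)
  have hBc : ∀ a, IsPreconnected (B a) := fun a => by
    have : B a = (fun z => z + a * c) '' D := by
      ext z
      constructor
      · intro hz
        exact ⟨_, hz, by simp⟩
      · rintro ⟨y, hy, rfl⟩
        simpa [B] using hy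
    rw [this]
    exact hDc.image _ (by fun_prop)
  have hBd : ∀ a b z, z ∈ B a → z ∈ B b → a = b := by
    intro a b z ha hb
    have := hdis (z - a * c) ((b : ℤ) - (a : ℤ)) ha (by
      rw [hB] at hb
      convert hb using 1
      push_cast
      ring)
    omega
  let u : ℕ → ℂ := fun a => if p ≤ a then h^[n1] w1 - p * c + a * c else h^[n0] w0 + q * c + a * c
  let v : ℕ → ℂ := fun a => if a < q then w1 + a * c else w0 + a * c
  have hu : ∀ a, u a ∈ B a := by
    intro a
    rw [hB]
    simp only [u]
    split_ifs
    · rwa [add_sub_cancel_right]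
    · rwa [add_sub_cancel_right]
  have hv : ∀ a, v a ∈ B a := by
    intro a
    rw [hB]
    simp only [v]
    split_ifs
    · rwa [add_sub_cancel_right]
    · rwa [add_sub_cancel_right]
  obtain ⟨φ, f1, f2, f3, f4⟩ := push_family B hBo hBc hBd u v hu hv (Finset.range (p + q))
  let g : ℂ → ℂ := fun z => φ (h z)
  have hgg : GoodMap g := f1.comp hg
  have hgfix : ∀ z, g z ≠ z := by
    intro z hz
    by_cases hex : ∃ a ∈ Finset.range (p + q), h z ∈ B a
    · obtain ⟨a, ha, hza⟩ := hex
      have h1 := f3 a ha _ hza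
      change g z ∈ B a at h1
      rw [hz, hB] at h1
      rw [hB] at hza
      have h2 := hc z (-(a : ℤ))
      refine hfree _ h1 0 ?_
      push_cast at h2 ⊢
      rw [sub_eq_add_neg z, ← neg_mul, h2]
      convert hza using 1
      ring
    · push Not at hex
      have := f4 _ hex
      exact hfix z (this.symm.trans hz)
  -- orbits of g
  have horb : ∀ y n, 0 < n → (∀ i, 0 < i → i < n → ∀ a : ℕ, h^[i] y ∉ B a) →
      g^[n] y = φ (h^[n] y) := by
    intro y n hn hi
    have h1 : ∀ i, i < n → g^[i] y = h^[i] y := by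
      intro i
      induction i with
      | zero => intro _; rfl
      | succ i ih =>
        intro hin
        rw [Function.iterate_succ_apply', Function.iterate_succ_apply', ih (by omega)]
        refine f4 _ (fun a _ => ?_)
        have := hi (i + 1) (by omega) hin a
        rwa [Function.iterate_succ_apply'] at this
    obtain ⟨m, rfl⟩ : ∃ m, n = m + 1 := ⟨n - 1, by omega⟩
    rw [Function.iterate_succ_apply', h1 m (by omega), Function.iterate_succ_apply']
  let S : ℕ → ℕ := fun a => if a < q then a + p else a - q
  have hS : ∀ a, a < p + q → S a < p + q := by
    intro a ha
    simp only [S]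
    split_ifs <;> omega
  have hgS : ∀ a, a < p + q → ∃ k, 0 < k ∧ g^[k] (v a) = v (S a) := by
    intro a ha
    have hsh : ∀ (n : ℕ) (y : ℂ), h^[n] (y + a * c) = h^[n] y + a * c := by
      intro n y
      have := iterate_shift hc n y (a : ℤ)
      push_cast at this
      exact this
    by_cases haq : a < q
    · refine ⟨n1, hn1, ?_⟩
      have e1 : v a = w1 + a * c := by simp [v, haq]
      have e2 : S a = a + p := by simp [S, haq]
      have e3 : u (a + p) = h^[n1] (v a) := by
        rw [e1, hsh]
        simp only [u]
        rw [if_pos (by omega)]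
        push_cast
        ring
      rw [e2, ← f2 (a + p) (Finset.mem_range.2 (by omega)), e3]
      refine horb _ _ hn1 ?_
      intro i hi hin b hb
      rw [e1, hsh, hB] at hb
      refine hi1 i hi hin ((b : ℤ) - a) ?_
      convert hb using 1
      push_cast
      ring
    · refine ⟨n0, hn0, ?_⟩
      have e1 : v a = w0 + a * c := by simp [v, haq]
      have e2 : S a = a - q := by simp [S, haq]
      have e3 : u (a - q) = h^[n0] (v a) := by
        rw [e1, hsh]
        simp only [u]
        rw [if_neg (by omega), Nat.cast_sub (by omega)]
        ring
      rw [e2, ← f2 (a - q) (Finset.mem_range.2 (by omega)), e3]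
      refine horb _ _ hn0 ?_
      intro i hi hin b hb
      rw [e1, hsh, hB] at hb
      refine hi0 i hi hin ((a : ℤ) - b) ?_
      convert hb using 1
      push_cast
      ring
  have hSm : ∀ m a, a < p + q → S^[m] a < p + q := by
    intro m
    induction m with
    | zero => intro a ha; exact ha
    | succ m ih => intro a ha; rw [Function.iterate_succ_apply]; exact ih _ (hS a ha)
  have hgSm : ∀ m a, a < p + q → ∃ k, m ≤ k ∧ g^[k] (v a) = v (S^[m] a) := by
    intro m
    induction m with
    | zero => intro a ha; exact ⟨0, le_refl _, rfl⟩
    | succ m ih =>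
      intro a ha
      obtain ⟨k, hk, hk'⟩ := hgS a ha
      obtain ⟨l, hl, hl'⟩ := ih (S a) (hS a ha)
      refine ⟨l + k, by omega, ?_⟩
      rw [Function.iterate_add_apply, hk', hl', Function.iterate_succ_apply]
  obtain ⟨m, m', hne, heq⟩ := Finite.exists_ne_map_eq_of_infinite
    (fun m : ℕ => (⟨S^[m] 0, hSm m 0 (by omega)⟩ : Fin (p + q)))
  have heq' : S^[m] 0 = S^[m'] 0 := by simpa using heq
  have key : ∀ m m' : ℕ, m < m' → S^[m] 0 = S^[m'] 0 → False := by
    intro m m' hlt he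
    obtain ⟨k, hk, hk'⟩ := hgSm (m' - m) (S^[m] 0) (hSm m 0 (by omega))
    rw [← Function.iterate_add_apply, Nat.sub_add_cancel hlt.le, ← he] at hk'
    exact no_periodic hgg hgfix _ k (by omega) hk'
  rcases lt_or_gt_of_ne hne with hlt | hlt
  · exact key m m' hlt heq'
  · exact key m' m hlt heq'.symm

/-! ### Lifting to the universal cover of the plane minus a fixed point -/

theorem angVar_of_exp {γ : ℝ → ℂ} {η : ℝ → ℂ} (hη : ContinuousOn η (Icc 0 1))
    (h : ∀ t ∈ Icc (0 : ℝ) 1, Complex.exp (η t) = γ t) :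
    angVar γ = (η 1 - η 0).im / (2 * Real.pi) := by
  have hex : ∃ θ : ℝ → ℝ, ContinuousOn θ (Set.Icc 0 1) ∧
      ∀ t ∈ Set.Icc (0 : ℝ) 1, γ t = (‖γ t‖ : ℂ) * Complex.exp ((θ t : ℂ) * Complex.I) := by
    refine ⟨fun t => (η t).im, Complex.continuous_im.comp_continuousOn hη, ?_⟩
    intro t ht
    rw [← h t ht, Complex.norm_exp]
    rw [Complex.ofReal_exp, ← Complex.exp_add, Complex.re_add_im]
  rw [angVar, dif_pos hex]
  obtain ⟨h1, h2⟩ := hex.choose_spec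
  generalize hex.choose = θ at h1 h2
  have key : (fun t => ((θ t : ℂ) - ((η t).im : ℂ)) * Complex.I) 1 =
      (fun t => ((θ t : ℂ) - ((η t).im : ℂ)) * Complex.I) 0 := by
    refine constOn_of_exp (S := Icc (0 : ℝ) 1)
      (F := fun t => ((θ t : ℂ) - ((η t).im : ℂ)) * Complex.I) (c := 1) isPreconnected_Icc ?_ ?_
      (x := 1) (y := 0) (by simp) (by simp)
    · refine ContinuousOn.mul (ContinuousOn.sub ?_ ?_) continuousOn_const
      · exact Complex.continuous_ofReal.comp_continuousOn h1
      · exact Complex.continuous_ofReal.comp_continuousOn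
          (Complex.continuous_im.comp_continuousOn hη)
    · intro t ht
      have h3 := h2 t ht
      have hne : (‖γ t‖ : ℂ) ≠ 0 := by
        rw [← h t ht]; simp [Complex.exp_ne_zero]
      have h4 : γ t = (‖γ t‖ : ℂ) * Complex.exp (((η t).im : ℂ) * Complex.I) := by
        rw [← h t ht, Complex.norm_exp]
        rw [Complex.ofReal_exp, ← Complex.exp_add, Complex.re_add_im]
      have h5 : Complex.exp ((θ t : ℂ) * Complex.I) =
          Complex.exp (((η t).im : ℂ) * Complex.I) :=
        mul_left_cancel₀ hne (h3.symm.trans h4)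
      rw [sub_mul, Complex.exp_sub, h5, div_self (Complex.exp_ne_zero _)]
  have key2 := mul_right_cancel₀ Complex.I_ne_zero key
  have key3 : θ 1 - (η 1).im = θ 0 - (η 0).im := by exact_mod_cast key2
  rw [Complex.sub_im]
  congr 1
  linarith

theorem exp_localHomeo : IsLocalHomeomorph Complex.exp := by
  have h1 := Complex.isCoveringMap_exp.isLocalHomeomorph
  have h2 : IsOpenEmbedding (Subtype.val : {z : ℂ // z ≠ 0} → ℂ) :=
    IsOpen.isOpenEmbedding_subtypeVal isClosed_singleton.1
  exact h2.isLocalHomeomorph.comp h1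

/-- Pairs of distinct points of the plane. -/
abbrev OffDiagPairs := {p : ℂ × ℂ // p.1 ≠ p.2}

theorem exists_lift {f : ℂ ≃ₜ ℂ} (I : HIsotopy f) (z' : ℂ) (hz' : z' ∈ FixPts ⇑f) :
    ∃ h : ℂ → ℂ, GoodMap h ∧ (∀ w, Complex.exp (h w) = f (z' + Complex.exp w) - z') ∧
      (∀ w c, Complex.exp c = 1 → h (w + c) = h w + c) ∧
      ∀ w, Enlace I (z' + Complex.exp w) z' = (h w - w).im / (2 * Real.pi) := by
  have hF := I.cont
  have hvc : Continuous (fun p : ℝ × ℂ =>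
      I.F p.1 (z' + Complex.exp p.2) - I.F p.1 z') := by
    refine Continuous.sub ?_ ?_
    · exact hF.comp (by fun_prop : Continuous fun p : ℝ × ℂ => (p.1, z' + Complex.exp p.2))
    · exact hF.comp (by fun_prop : Continuous fun p : ℝ × ℂ => (p.1, z'))
  obtain ⟨H, H1, H2⟩ := exists_log_starConvex (S := (univ : Set (ℝ × ℂ))) (c := 0) (mem_univ _)
    (starConvex_univ _) hvc.continuousOn (by
      intro p _ h0
      have := (I.F p.1).injective (sub_eq_zero.1 h0)
      exact Complex.exp_ne_zero p.2 (by simpa using this))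
  have H1c : Continuous H := continuousOn_univ.1 H1
  have H2' : ∀ t w, Complex.exp (H (t, w)) = I.F t (z' + Complex.exp w) - I.F t z' :=
    fun t w => H2 (t, w) (mem_univ _)
  have hz0 : ∀ w, Complex.exp (H (0, w)) = Complex.exp w := by
    intro w; rw [H2', I.zero]; simp
  set C := H (0, 0) with hC
  have hCe : Complex.exp C = 1 := by rw [hC, hz0]; simp
  have hC0 : ∀ w, H (0, w) = w + C := by
    intro w
    have := constOn_of_exp (S := (univ : Set ℂ)) (F := fun w => H (0, w) - w) (c := 1)
      isPreconnected_univ (by fun_prop) (by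
        intro x _
        rw [Complex.exp_sub, hz0, div_self (Complex.exp_ne_zero _)]) (mem_univ w) (mem_univ 0)
    simp only [sub_zero] at this
    rw [hC, ← this]; ring
  set G : ℝ → ℂ → ℂ := fun t w => H (t, w) - C with hG
  have Gc : Continuous (fun p : ℝ × ℂ => G p.1 p.2) := by
    simp only [hG]; fun_prop
  have G0 : ∀ w, G 0 w = w := by intro w; simp [hG, hC0]
  have Ge : ∀ t w, Complex.exp (G t w) = I.F t (z' + Complex.exp w) - I.F t z' := by
    intro t w
    simp only [hG]
    rw [Complex.exp_sub, hCe, div_one, H2']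
  have Geq : ∀ t w c, Complex.exp c = 1 → G t (w + c) = G t w + c := by
    intro t w c hc
    have := constOn_of_exp (S := (univ : Set ℝ)) (F := fun t => G t (w + c) - G t w) (c := 1)
      isPreconnected_univ (by
        refine Continuous.continuousOn (Continuous.sub ?_ ?_)
        · exact Gc.comp (by fun_prop : Continuous fun t : ℝ => (t, w + c))
        · exact Gc.comp (by fun_prop : Continuous fun t : ℝ => (t, w))) (by
        intro x _
        have : Complex.exp (G x (w + c)) = Complex.exp (G x w) := by
          rw [Ge, Ge, Complex.exp_add, hc, mul_one]
        rw [Complex.exp_sub, this, div_self (Complex.exp_ne_zero _)]) (mem_univ t) (mem_univ 0)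
    simp only [G0] at this
    linear_combination this
  have Ginj : ∀ t, Function.Injective (G t) := by
    intro t a b hab
    have h1 : Complex.exp (G t a) = Complex.exp (G t b) := by rw [hab]
    rw [Ge, Ge] at h1
    have h2 := (I.F t).injective (sub_left_injective h1)
    have h3 : Complex.exp a = Complex.exp b := add_left_cancel h2
    have h4 : Complex.exp (a - b) = 1 := by
      rw [Complex.exp_sub, h3, div_self (Complex.exp_ne_zero _)]
    have h5 := Geq t b (a - b) h4
    rw [add_sub_cancel, hab] at h5
    have : a - b = 0 := by linear_combination -h5
    exact sub_eq_zero.1 this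
  have h1c : Continuous (G 1) := Gc.comp (by fun_prop : Continuous fun w : ℂ => ((1 : ℝ), w))
  refine ⟨G 1, ⟨h1c, Ginj 1, ?_, ?_⟩, ?_, fun w c hc => Geq 1 w c hc, ?_⟩
  · -- open
    have hcomp : IsLocalHomeomorph (Complex.exp ∘ G 1) := by
      have e : Complex.exp ∘ G 1 =
          (((Homeomorph.addLeft z').trans (I.F 1)).trans
            (Homeomorph.subRight (I.F 1 z'))) ∘ Complex.exp := by
        funext w
        simp only [Function.comp]
        rw [Ge]
        rfl
      rw [e]
      exact (Homeomorph.isLocalHomeomorph _).comp exp_localHomeo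
    exact (hcomp.of_comp exp_localHomeo h1c).isOpenMap
  · -- linking lift
    have hVc : Continuous (fun q : ℝ × OffDiagPairs =>
        (G q.1 q.2.1.1 - G q.1 q.2.1.2) / (q.2.1.1 - q.2.1.2)) := by
      refine Continuous.div (Continuous.sub ?_ ?_) (by fun_prop) ?_
      · exact Gc.comp (by fun_prop : Continuous fun q : ℝ × OffDiagPairs => (q.1, q.2.1.1))
      · exact Gc.comp (by fun_prop : Continuous fun q : ℝ × OffDiagPairs => (q.1, q.2.1.2))
      · intro q
        exact sub_ne_zero.2 q.2.2
    obtain ⟨Θ, T1, T2, T3⟩ := exists_log_homotopy (A := OffDiagPairs) _ hVc.continuousOn (by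
        intro t _ a
        exact div_ne_zero (sub_ne_zero.2 fun h => a.2 (Ginj t h)) (sub_ne_zero.2 a.2)) (by
        intro a
        simp only [G0]
        exact div_self (sub_ne_zero.2 a.2))
    have hsymm : ∀ a b : OffDiagPairs, a.1.1 = b.1.2 → a.1.2 = b.1.1 → Θ 1 a = Θ 1 b := by
      intro a b hab hba
      have hcont : ∀ x : OffDiagPairs, Continuous (fun t : ↥(Icc (0 : ℝ) 1) => Θ t x) := fun x =>
        T1.comp (by fun_prop : Continuous fun t : ↥(Icc (0 : ℝ) 1) => (t, x))
      have := constOn_of_exp (S := (univ : Set ↥(Icc (0 : ℝ) 1)))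
        (F := fun t => Θ t a - Θ t b) (c := 1)
        isPreconnected_univ ((hcont a).sub (hcont b)).continuousOn (by
          intro x _
          have : Complex.exp (Θ x a) = Complex.exp (Θ x b) := by
            rw [T2 x x.2, T2 x x.2]
            simp only
            rw [hab, hba, ← neg_div_neg_eq, neg_sub, neg_sub]
          rw [Complex.exp_sub, this, div_self (Complex.exp_ne_zero _)])
        (mem_univ ⟨1, by simp⟩) (mem_univ ⟨0, by simp⟩)
      simp only [T3, sub_self] at this
      exact sub_eq_zero.1 this
    refine ⟨fun x y => if h : x ≠ y then Θ 1 ⟨(x, y), h⟩ else 0, ?_, ?_, ?_⟩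
    · rw [continuousOn_iff_continuous_domRestrict]
      have : ({p : ℂ × ℂ | p.1 ≠ p.2}.domRestrict fun p : ℂ × ℂ =>
          if h : p.1 ≠ p.2 then Θ 1 ⟨(p.1, p.2), h⟩ else 0) = fun p => Θ 1 ⟨p.1, p.2⟩ := by
        funext p
        have hp : p.1.1 ≠ p.1.2 := p.2
        simp only [Set.domRestrict_apply, dif_pos hp]
      rw [this]
      exact T1.comp (by fun_prop : Continuous fun p : ↥{p : ℂ × ℂ | p.1 ≠ p.2} =>
        ((⟨1, by simp⟩ : ↥(Icc (0 : ℝ) 1)), (⟨p.1, p.2⟩ : OffDiagPairs)))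
    · intro x y hxy
      simp only [dif_pos hxy, dif_pos hxy.symm]
      exact hsymm _ _ rfl rfl
    · intro x y hxy
      simp only [dif_pos hxy]
      rw [T2 1 (by simp)]
      exact div_mul_cancel₀ _ (sub_ne_zero.2 hxy)
  · intro w
    rw [Ge, I.one]
    rw [show f z' = z' from hz']
  · intro w
    have := angVar_of_exp (γ := fun t => I.F t (z' + Complex.exp w) - I.F t z')
      (η := fun t => G t w)
      (Gc.comp (by fun_prop : Continuous fun t : ℝ => (t, w))).continuousOn
      (fun t _ => Ge t w)
    rw [Enlace, this, G0]


theorem iter_lift {f : ℂ ≃ₜ ℂ} {z' : ℂ} {h : ℂ → ℂ}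
    (he : ∀ w, Complex.exp (h w) = f (z' + Complex.exp w) - z') (n : ℕ) (w : ℂ) :
    z' + Complex.exp (h^[n] w) = (⇑f)^[n] (z' + Complex.exp w) := by
  induction n with
  | zero => simp
  | succ n ih => rw [Function.iterate_succ_apply', Function.iterate_succ_apply', ← ih, he]; ring

theorem sum_enlace {f : ℂ ≃ₜ ℂ} (I : HIsotopy f) {z' : ℂ} {h : ℂ → ℂ}
    (he : ∀ w, Complex.exp (h w) = f (z' + Complex.exp w) - z')
    (hl : ∀ w, Enlace I (z' + Complex.exp w) z' = (h w - w).im / (2 * Real.pi))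
    (n : ℕ) (w : ℂ) :
    ∑ r ∈ Finset.range n, Enlace I ((⇑f)^[r] (z' + Complex.exp w)) z' =
      (h^[n] w - w).im / (2 * Real.pi) := by
  induction n with
  | zero => simp
  | succ n ih =>
    rw [Finset.sum_range_succ, ih, ← iter_lift he, hl, Function.iterate_succ_apply']
    simp only [Complex.sub_im]
    ring

theorem exists_branch {U : Set ℂ} (e : U ≃ₜ ℂ) {z' : ℂ} (hz' : z' ∉ U) :
    ∃ l : ℂ → ℂ, ContinuousOn l U ∧ ∀ z ∈ U, Complex.exp (l z) = z - z' := by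
  obtain ⟨T, T1, T2⟩ := exists_log_starConvex (S := (univ : Set ℂ)) (c := 0) (mem_univ _)
    (starConvex_univ _) (v := fun x => (e.symm x : ℂ) - z')
    (Continuous.continuousOn (by fun_prop)) (by
      intro x _ h0
      have h1 := sub_eq_zero.1 h0
      exact hz' (h1 ▸ (e.symm x).2))
  refine ⟨fun z => if h : z ∈ U then T (e ⟨z, h⟩) else 0, ?_, ?_⟩
  · rw [continuousOn_iff_continuous_domRestrict]
    have : (U.domRestrict fun z => if h : z ∈ U then T (e ⟨z, h⟩) else 0) = fun p => T (e p) := by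
      funext p
      simp only [Set.domRestrict_apply, dif_pos p.2]
    rw [this]
    exact (continuousOn_univ.1 T1).comp e.continuous
  · intro z hz
    simp only [dif_pos hz]
    rw [T2 _ (mem_univ _)]
    simp

theorem isOpen_branch_image {U : Set ℂ} (hU : IsOpen U) {z' : ℂ} {l : ℂ → ℂ}
    (hl : ContinuousOn l U) (hle : ∀ z ∈ U, Complex.exp (l z) = z - z') :
    IsOpen (l '' U) := by
  have h1 : Continuous (U.domRestrict l) := continuousOn_iff_continuous_domRestrict.1 hl
  have h2 : IsLocalHomeomorph (Complex.exp ∘ U.domRestrict l) := by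
    have e : Complex.exp ∘ U.domRestrict l =
        (Homeomorph.subRight z') ∘ (Subtype.val : U → ℂ) := by
      funext p
      simp only [Function.comp, Set.domRestrict_apply]
      rw [hle _ p.2]
      rfl
    rw [e]
    exact (Homeomorph.isLocalHomeomorph _).comp
      (IsOpen.isOpenEmbedding_subtypeVal hU).isLocalHomeomorph
  have h3 := (h2.of_comp exp_localHomeo h1).isOpenMap.isOpen_range
  rwa [Set.range_domRestrict] at h3

theorem GoodMap.sub_const {h : ℂ → ℂ} (hg : GoodMap h) (c : ℂ) : GoodMap (fun w => h w - c) where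
  cont := hg.cont.sub continuous_const
  inj := fun a b hab => hg.inj (sub_left_injective hab)
  opn := (Homeomorph.subRight c).isOpenMap.comp hg.opn
  lk := by
    obtain ⟨E, E1, E2, E3⟩ := hg.lk
    refine ⟨E, E1, E2, fun x y hxy => ?_⟩
    rw [E3 x y hxy]
    ring

theorem iter_sub_const {h : ℂ → ℂ} {c : ℂ} (hc : ∀ z, ∀ j : ℤ, h (z + j * c) = h z + j * c)
    (k : ℤ) (n : ℕ) (w : ℂ) :
    (fun w => h w - k * c)^[n] w = h^[n] w - ((n : ℤ) * k : ℤ) * c := by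
  induction n with
  | zero => simp
  | succ n ih =>
    rw [Function.iterate_succ_apply', ih, Function.iterate_succ_apply']
    have := hc (h^[n] w) (-((n : ℤ) * k))
    rw [sub_eq_add_neg (h^[n] w), ← neg_mul, ← Int.cast_neg, this]
    push_cast
    ring

theorem return_estimate {f : ℂ ≃ₜ ℂ} (I : HIsotopy f) {z' : ℂ} {h : ℂ → ℂ}
    (he : ∀ w, Complex.exp (h w) = f (z' + Complex.exp w) - z')
    (hl : ∀ w, Enlace I (z' + Complex.exp w) z' = (h w - w).im / (2 * Real.pi))
    {U : Set ℂ} (hU : IsOpen U) {l : ℂ → ℂ}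
    (hlc : ContinuousOn l U) (hle : ∀ z ∈ U, Complex.exp (l z) = z - z')
    {z : ℂ} (hz : z ∈ RecPlus f ∩ U) {ρ : ℝ} (hρ : HasRot I z' z ρ) {ε : ℝ} (hε : 0 < ε) :
    ∃ n : ℕ, 0 < n ∧ ∃ j : ℤ, h^[n] (l z) - j * (2 * Real.pi * Complex.I) ∈ l '' U ∧
      |(j : ℝ) - n * ρ| < n * ε := by
  obtain ⟨⟨N, hN, hNz⟩, hzU⟩ := hz
  have hav := hρ N hN hNz
  have hzw : z' + Complex.exp (l z) = z := by rw [hle z hzU]; ring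
  have ev1 : ∀ᶠ i in atTop, (⇑f)^[N i] z ∈ U := hNz.eventually (hU.mem_nhds hzU)
  have ev2 : ∀ᶠ i in atTop, dist (l ((⇑f)^[N i] z)) (l z) < 1 :=
    ((hlc.continuousAt (hU.mem_nhds hzU)).tendsto.comp hNz).eventually
      (Metric.ball_mem_nhds _ one_pos)
  have ev3 := hav.eventually (Metric.ball_mem_nhds ρ (half_pos hε))
  obtain ⟨m, hm⟩ := exists_nat_gt (2 / ε)
  have ev4 : ∀ᶠ i in atTop, m + 1 ≤ N i := hN.tendsto_atTop.eventually_ge_atTop (m + 1)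
  obtain ⟨i, h1, h2, h3, h4⟩ := (ev1.and (ev2.and (ev3.and ev4))).exists
  set n := N i with hn
  have hnpos : 0 < n := by omega
  have hnR : (0 : ℝ) < n := by exact_mod_cast hnpos
  have hit := iter_lift he n (l z)
  rw [hzw] at hit
  have hexp : Complex.exp (h^[n] (l z)) = Complex.exp (l ((⇑f)^[n] z)) := by
    rw [hle _ h1, ← hit]; ring
  obtain ⟨j, hj⟩ := Complex.exp_eq_exp_iff_exists_int.1 hexp
  refine ⟨n, hnpos, j, ⟨(⇑f)^[n] z, h1, by rw [hj]; ring⟩, ?_⟩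
  have hsum := sum_enlace I he hl n (l z)
  rw [hzw] at hsum
  have h3' : |(∑ r ∈ Finset.range n, Enlace I ((⇑f)^[r] z) z') / (n : ℝ) - ρ| < ε / 2 := h3
  rw [hsum] at h3'
  have him : (h^[n] (l z) - l z).im / (2 * Real.pi) =
      j + (l ((⇑f)^[n] z) - l z).im / (2 * Real.pi) := by
    have hpi := Real.pi_pos.ne'
    rw [hj]
    simp
    field_simp
    ring
  rw [him] at h3'
  set d := (l ((⇑f)^[n] z) - l z).im / (2 * Real.pi) with hd
  have hdle : |d| ≤ 1 := by
    have h5 : |(l ((⇑f)^[n] z) - l z).im| ≤ 1 := by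
      refine (Complex.abs_im_le_norm _).trans ?_
      rw [← dist_eq_norm]; exact h2.le
    have h6 : (1 : ℝ) ≤ 2 * Real.pi := by linarith [Real.pi_gt_three]
    rw [hd, abs_div, abs_of_pos (by linarith : (0 : ℝ) < 2 * Real.pi), div_le_one (by linarith)]
    linarith
  have hnm : 1 ≤ n * (ε / 2) := by
    have h7 : (m : ℝ) + 1 ≤ n := by exact_mod_cast h4
    have h8 : 2 / ε < n := by linarith
    rw [div_lt_iff₀ hε] at h8
    linarith
  have h9 : |(j : ℝ) + d - n * ρ| < n * (ε / 2) := by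
    have : (j : ℝ) + d - n * ρ = n * ((j + d) / n - ρ) := by field_simp
    rw [this, abs_mul, abs_of_pos hnR]
    exact mul_lt_mul_of_pos_left h3' hnR
  rw [abs_lt] at h9 ⊢
  rw [abs_le] at hdle
  constructor <;> linarith [h9.1, h9.2, hdle.1, hdle.2]

theorem no_cross {f : ℂ ≃ₜ ℂ} (I : HIsotopy f) {z' : ℂ} (hz' : z' ∈ FixPts ⇑f)
    {M : ℝ} (hM : ∀ z ∈ FixPts ⇑f, z ≠ z' → |Enlace I z z'| ≤ M)
    {U : Set ℂ} (hU : FreeDisc f U) {z₀ z₁ : ℂ} (h₀ : z₀ ∈ RecPlus f ∩ U)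
    (h₁ : z₁ ∈ RecPlus f ∩ U) {ρ₀ ρ₁ : ℝ} (hr₀ : HasRot I z' z₀ ρ₀) (hr₁ : HasRot I z' z₁ ρ₁)
    (k : ℤ) (hk : M < |(k : ℝ)|) (hk0 : ρ₀ < k) (hk1 : k < ρ₁) : False := by
  obtain ⟨hUo, ⟨e⟩, hdisj⟩ := hU
  have hfU : ∀ z ∈ U, f z ∉ U := fun z hz hfz =>
    (Set.disjoint_left.1 hdisj) (mem_image_of_mem _ hz) hfz
  have hz'U : z' ∉ U := fun hz => hfU z' hz (by rw [show f z' = z' from hz']; exact hz)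
  obtain ⟨h, hg, he, heq, hl⟩ := exists_lift I z' hz'
  obtain ⟨l, hlc, hle⟩ := exists_branch e hz'U
  set c : ℂ := 2 * Real.pi * Complex.I with hc
  have hce : ∀ j : ℤ, Complex.exp (j * c) = 1 := fun j => Complex.exp_int_mul_two_pi_mul_I j
  have hc0 : c ≠ 0 := Complex.two_pi_I_ne_zero
  have hcq : ∀ z, ∀ j : ℤ, h (z + j * c) = h z + j * c := fun z j => heq z _ (hce j)
  have hexpsub : ∀ (w : ℂ) (j : ℤ), Complex.exp (w - j * c) = Complex.exp w := by
    intro w j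
    rw [Complex.exp_sub, hce, div_one]
  have hDu : ∀ w ∈ l '' U, z' + Complex.exp w ∈ U := by
    rintro _ ⟨z, hz, rfl⟩
    rw [hle z hz]; simpa using hz
  have hUconn : IsPreconnected U := by
    have : IsPreconnected (Set.range (fun x => (e.symm x : ℂ))) :=
      isPreconnected_range (by fun_prop)
    have hr : Set.range (fun x => (e.symm x : ℂ)) = U := by
      ext z
      constructor
      · rintro ⟨x, rfl⟩
        exact (e.symm x).2
      · intro hz
        exact ⟨e ⟨z, hz⟩, by simp⟩
    rwa [hr] at this
  refine franks (h := fun w => h w - k * c) (c := c) (D := l '' U) (hg.sub_const _) ?_ ?_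
    (isOpen_branch_image hUo hlc hle) (hUconn.image l hlc) ?_ ?_ ?_ ?_
  · intro w hw
    have hw' : h w - w = k * c := by linear_combination hw
    have hfx : f (z' + Complex.exp w) = z' + Complex.exp w := by
      have h1 := he w
      rw [show h w = w + k * c by linear_combination hw, Complex.exp_add, hce, mul_one] at h1
      linear_combination -h1
    have h2 := hM (z' + Complex.exp w) hfx (by simp [Complex.exp_ne_zero])
    rw [hl, hw'] at h2
    have h3 : ((k : ℂ) * c).im / (2 * Real.pi) = k := by
      have hpi := Real.pi_pos.ne'
      rw [hc]
      simp
    rw [h3] at h2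
    linarith
  · intro z j
    rw [hcq]; ring
  · rintro _ j ⟨x, hx, rfl⟩ ⟨y, hy, hxy⟩
    have h1 := congrArg Complex.exp hxy
    rw [hexpsub, hle x hx, hle y hy] at h1
    have h2 : y = x := by linear_combination h1
    rw [h2] at hxy
    have h3 : (j : ℂ) * c = 0 := by linear_combination hxy
    rcases mul_eq_zero.1 h3 with h4 | h4
    · exact_mod_cast h4
    · exact absurd h4 hc0
  · intro w hw j hmem
    have h1 := hDu _ hmem
    rw [hexpsub, hexpsub, he] at h1
    exact hfU _ (hDu w hw) (by simpa using h1)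
  · obtain ⟨n, hn, j, hj, hjn⟩ := return_estimate I he hl hUo hlc hle h₁ hr₁
      (ε := ρ₁ - k) (by linarith)
    have hp : 0 < j - n * k := by
      rw [abs_lt] at hjn
      have : (0 : ℝ) < ((j - n * k : ℤ) : ℝ) := by
        push_cast
        linarith [hjn.1]
      exact_mod_cast this
    obtain ⟨p, hpe⟩ := Int.eq_ofNat_of_zero_le hp.le
    refine ⟨n, hn, l z₁, mem_image_of_mem _ h₁.2, p, by omega, ?_⟩
    rw [iter_sub_const hcq]
    have : ((j : ℂ) - n * k) = p := by exact_mod_cast congrArg (Int.cast : ℤ → ℂ) hpe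
    convert hj using 1
    rw [← this]
    push_cast
    ring
  · obtain ⟨n, hn, j, hj, hjn⟩ := return_estimate I he hl hUo hlc hle h₀ hr₀
      (ε := k - ρ₀) (by linarith)
    have hp : 0 < n * k - j := by
      rw [abs_lt] at hjn
      have : (0 : ℝ) < ((n * k - j : ℤ) : ℝ) := by
        push_cast
        linarith [hjn.2]
      exact_mod_cast this
    obtain ⟨p, hpe⟩ := Int.eq_ofNat_of_zero_le hp.le
    refine ⟨n, hn, l z₀, mem_image_of_mem _ h₀.2, p, by omega, ?_⟩
    rw [iter_sub_const hcq]
    have : ((n : ℂ) * k - j) = p := by exact_mod_cast congrArg (Int.cast : ℤ → ℂ) hpe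
    convert hj using 1
    rw [← this]
    push_cast
    ring

theorem free_disc_bound {f : ℂ ≃ₜ ℂ} (I : HIsotopy f) (hP1 : P1 I) {z' : ℂ}
    (hz' : z' ∈ FixPts ⇑f) {U : Set ℂ} (hU : FreeDisc f U) :
    ∃ M : ℝ, ∀ z ∈ RecPlus f ∩ U, ∀ ρ : ℝ, HasRot I z' z ρ → |ρ| ≤ M := by
  obtain ⟨M, hM⟩ := hP1
  have hM' : ∀ z ∈ FixPts ⇑f, z ≠ z' → |Enlace I z z'| ≤ M := fun z hz hne => hM z hz z' hz' hne
  by_cases hex : ∃ z₀ ∈ RecPlus f ∩ U, ∃ ρ₀ : ℝ, HasRot I z' z₀ ρ₀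
  · obtain ⟨z₀, hz₀, ρ₀, hr₀⟩ := hex
    obtain ⟨m, hm⟩ := exists_nat_gt (max M |ρ₀|)
    have hm1 : M < m := (le_max_left _ _).trans_lt hm
    have hm2 : |ρ₀| < m := (le_max_right _ _).trans_lt hm
    rw [abs_lt] at hm2
    refine ⟨m, fun z hz ρ hr => ?_⟩
    rw [abs_le]
    constructor
    · by_contra hlt
      refine no_cross I hz' hM' hU hz hz₀ hr hr₀ (-(m : ℤ)) ?_ ?_ ?_
      · simpa using hm1
      · push_cast; linarith
      · push_cast; linarith [hm2.1]
    · by_contra hlt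
      refine no_cross I hz' hM' hU hz₀ hz hr₀ hr (m : ℤ) ?_ ?_ ?_
      · simpa using hm1
      · push_cast; linarith [hm2.2]
      · push_cast; linarith
  · exact ⟨0, fun z hz ρ hr => absurd ⟨z, hz, ρ, hr⟩ hex⟩

theorem exists_ball_freeDisc (f : ℂ ≃ₜ ℂ) {z₀ : ℂ} (hz : z₀ ∉ FixPts ⇑f) :
    ∃ U ∈ 𝓝 z₀, FreeDisc f U := by
  have hne : f z₀ ≠ z₀ := hz
  obtain ⟨A, B, hA, hB, hzA, hzB, hAB⟩ := t2_separation hne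
  have h1 : B ∩ f ⁻¹' A ∈ 𝓝 z₀ :=
    inter_mem (hB.mem_nhds hzB) (f.continuous.continuousAt.preimage_mem_nhds (hA.mem_nhds hzA))
  obtain ⟨r, hr, hsub⟩ := Metric.mem_nhds_iff.1 h1
  refine ⟨ball z₀ r, ball_mem_nhds _ hr, isOpen_ball, ?_, ?_⟩
  · have e := (OpenPartialHomeomorph.univBall z₀ r).toHomeomorphSourceTarget
    rw [OpenPartialHomeomorph.univBall_source, OpenPartialHomeomorph.univBall_target _ hr] at e
    exact ⟨e.symm.trans (Homeomorph.Set.univ ℂ)⟩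
  · rw [Set.disjoint_left]
    rintro _ ⟨x, hx, rfl⟩ hfx
    exact Set.disjoint_left.1 hAB (hsub hx).2 (hsub hfx).1

theorem stmt18_rotation_number_boundedness
    (f : ℂ ≃ₜ ℂ) (I : HIsotopy f) (hP1 : P1 I) (hP2 : P2 I)
    (hnc : ¬ IsCompact (FixPts ⇑f)) (hA : Adapted I)
    (z' : ℂ) (hz' : z' ∈ FixPts ⇑f) :
    (∃ M : ℝ, ∀ z ∈ FixPts ⇑f \ {z'}, ∀ ρ : ℝ, HasRot I z' z ρ → |ρ| ≤ M) ∧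
      (∀ U : Set ℂ, FreeDisc f U → ∃ M : ℝ, ∀ z ∈ RecPlus f ∩ U,
        ∀ ρ : ℝ, HasRot I z' z ρ → |ρ| ≤ M) ∧
      (∀ z₀ ∈ RecPlus f \ FixPts ⇑f, ∃ V ∈ 𝓝 z₀, ∃ M : ℝ,
        ∀ z ∈ V ∩ RecPlus f, ∀ ρ : ℝ, HasRot I z' z ρ → |ρ| ≤ M) := by
  refine ⟨?_, fun U hU => free_disc_bound I hP1 hz' hU, ?_⟩
  · obtain ⟨M, hM⟩ := hP1
    refine ⟨M, fun z hz ρ hr => ?_⟩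
    have hzf : f z = z := hz.1
    have hit : ∀ n : ℕ, (⇑f)^[n] z = z := fun n => Function.iterate_fixed hzf n
    have h1 := hr (fun i => i + 1) (fun a b hab => by simpa using hab)
      (by simp only [hit]; exact tendsto_const_nhds)
    have h2 : (fun k : ℕ => (∑ r ∈ Finset.range (k + 1), Enlace I ((⇑f)^[r] z) z') /
        ((k + 1 : ℕ) : ℝ)) = fun _ => Enlace I z z' := by
      funext k
      simp only [hit, Finset.sum_const, Finset.card_range, nsmul_eq_mul]
      have : ((k + 1 : ℕ) : ℝ) ≠ 0 := by positivity
      field_simp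
    rw [h2] at h1
    rw [tendsto_nhds_unique h1 tendsto_const_nhds]
    exact hM z hz.1 z' hz' (fun h => hz.2 h)
  · intro z₀ hz₀
    obtain ⟨U, hU, hfree⟩ := exists_ball_freeDisc f hz₀.2
    obtain ⟨M, hM⟩ := free_disc_bound I hP1 hz' hfree
    exact ⟨U, hU, M, fun z hz ρ hr => hM z ⟨hz.2, hz.1⟩ ρ hr⟩

end
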